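/- The function α ↦ θ₀(α) is continuous on the interval (0,2), where θ₀(α) denotes the unique zero of ρ_α in (t₀(α), min(π, πα)). -/

import Mathlib

open MeasureTheory Set

/-- `t₀(α) = 2πα/(α+2)`. -/
noncomputable def t0 (α : ℝ) : ℝ := 2 * Real.pi * α / (α + 2)

/-- `Z₀(θ) = (sin t₀(α) / sin θ)^(1/α)`. -/
noncomputable def Z0 (α θ : ℝ) : ℝ := (Real.sin (t0 α) / Real.sin θ) ^ (1 / α)

open Filter Topology

/-- The square root with values in the closed first quadrant, for `z` in the closed upper
half-plane. -/
noncomputable def upperSqrt (z : ℂ) : ℂ :=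
  ⟨√((‖z‖ + z.re) / 2), √((‖z‖ - z.re) / 2)⟩

theorem continuous_upperSqrt : Continuous upperSqrt := by
  have h : upperSqrt = fun z : ℂ =>
      ((√((‖z‖ + z.re) / 2) : ℝ) : ℂ) + ((√((‖z‖ - z.re) / 2) : ℝ) : ℂ) * Complex.I := by
    funext z
    exact Complex.mk_eq_add_mul_I _ _
  rw [h]
  fun_prop

theorem upperSqrt_sq {z : ℂ} (hz : 0 ≤ z.im) : upperSqrt z ^ 2 = z := by
  have hre := abs_le.1 (Complex.abs_re_le_norm z)
  have h₁ : 0 ≤ (‖z‖ + z.re) / 2 := by linarith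
  have h₂ : 0 ≤ (‖z‖ - z.re) / 2 := by linarith
  have hn : ‖z‖ ^ 2 = z.re ^ 2 + z.im ^ 2 := by
    rw [Complex.sq_norm, Complex.normSq_apply]; ring
  have hmul : √((‖z‖ + z.re) / 2) * √((‖z‖ - z.re) / 2) = z.im / 2 := by
    rw [← Real.sqrt_mul h₁, show (‖z‖ + z.re) / 2 * ((‖z‖ - z.re) / 2) = (z.im / 2) ^ 2 by
      linear_combination hn / 4]
    exact Real.sqrt_sq (by linarith)
  rw [sq]
  apply Complex.ext
  · simp only [upperSqrt, Complex.mul_re, Real.mul_self_sqrt h₁, Real.mul_self_sqrt h₂]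
    ring
  · simp only [upperSqrt, Complex.mul_im]
    linear_combination 2 * hmul

theorem upperSqrt_exp {t : ℝ} (h0 : 0 ≤ t) (hπ : t ≤ Real.pi) :
    upperSqrt (Complex.exp (Complex.I * t)) = Complex.exp (Complex.I * ((t / 2 : ℝ) : ℂ)) := by
  have hn : ‖Complex.exp (Complex.I * t)‖ = 1 := by
    rw [mul_comm]; exact Complex.norm_exp_ofReal_mul_I t
  have hpi := Real.pi_pos
  apply Complex.ext
  · simp only [upperSqrt, hn]
    rw [mul_comm, Complex.exp_ofReal_mul_I_re, mul_comm, Complex.exp_ofReal_mul_I_re,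
      Real.cos_half (by linarith) hπ]
  · simp only [upperSqrt, hn]
    rw [mul_comm, Complex.exp_ofReal_mul_I_re, mul_comm, Complex.exp_ofReal_mul_I_im,
      Real.sin_half_eq_sqrt h0 (by linarith)]

theorem le_upperSqrt_im {z : ℂ} {c B : ℝ} (hc : 0 ≤ c) (hcz : c ≤ z.im) (hB : 0 < B)
    (hzB : ‖z‖ ≤ B) : c / (2 * √B) ≤ (upperSqrt z).im := by
  have hre := abs_le.1 (Complex.abs_re_le_norm z)
  have hn : ‖z‖ ^ 2 = z.re ^ 2 + z.im ^ 2 := by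
    rw [Complex.sq_norm, Complex.normSq_apply]; ring
  apply Real.le_sqrt_of_sq_le
  rw [div_pow, mul_pow, Real.sq_sqrt hB.le, div_le_iff₀ (by positivity)]
  nlinarith [mul_nonneg (sub_nonneg.2 hre.2) (sub_nonneg.2 hzB),
    mul_nonneg (sub_nonneg.2 hre.2) (sub_nonneg.2 hre.2)]

/-- The negative of the radicand `e^{iθ} t^α - e^{i t₀(α)}`, as a function of `x = t^α`. -/
noncomputable def negRadicand (α θ x : ℝ) : ℂ :=
  Complex.exp (Complex.I * (t0 α : ℂ)) - Complex.exp (Complex.I * (θ : ℂ)) * (x : ℂ)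

theorem negRadicand_im (α θ x : ℝ) :
    (negRadicand α θ x).im = Real.sin (t0 α) - Real.sin θ * x := by
  rw [negRadicand, Complex.sub_im, Complex.im_mul_ofReal, mul_comm,
    Complex.exp_ofReal_mul_I_im, mul_comm Complex.I, Complex.exp_ofReal_mul_I_im]

theorem norm_negRadicand_le (α θ : ℝ) {x : ℝ} (hx : 0 ≤ x) : ‖negRadicand α θ x‖ ≤ 1 + x := by
  refine (norm_sub_le _ _).trans ?_
  rw [norm_mul, mul_comm, Complex.norm_exp_ofReal_mul_I, mul_comm Complex.I,
    Complex.norm_exp_ofReal_mul_I, Complex.norm_real, Real.norm_of_nonneg hx, one_mul]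

theorem t0_pos {α : ℝ} (hα : 0 < α) : 0 < t0 α := by
  have := Real.pi_pos
  unfold t0; positivity

theorem t0_lt_pi {α : ℝ} (hα : α ∈ Ioo (0 : ℝ) 2) : t0 α < Real.pi := by
  obtain ⟨h0, h2⟩ := hα
  rw [t0, div_lt_iff₀ (by linarith)]
  nlinarith [Real.pi_pos]

theorem t0_lt_pi_mul {α : ℝ} (hα : 0 < α) : t0 α < Real.pi * α := by
  rw [t0, div_lt_iff₀ (by linarith)]
  nlinarith [mul_pos (mul_pos Real.pi_pos hα) hα]

theorem continuousAt_t0 {α : ℝ} (hα : 0 < α) : ContinuousAt t0 α := by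
  unfold t0
  exact ContinuousAt.div (by fun_prop) (by fun_prop) (by linarith)

theorem sin_t0_pos {α : ℝ} (hα : α ∈ Ioo (0 : ℝ) 2) : 0 < Real.sin (t0 α) :=
  Real.sin_pos_of_pos_of_lt_pi (t0_pos hα.1) (t0_lt_pi hα)

theorem Z0_pos {α θ : ℝ} (hα : α ∈ Ioo (0 : ℝ) 2) (hθ : θ ∈ Ioo 0 Real.pi) : 0 < Z0 α θ :=
  Real.rpow_pos_of_pos (div_pos (sin_t0_pos hα) (Real.sin_pos_of_mem_Ioo hθ)) _

theorem Z0_rpow {α θ : ℝ} (hα : α ∈ Ioo (0 : ℝ) 2) (hθ : θ ∈ Ioo 0 Real.pi) :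
    Z0 α θ ^ α = Real.sin (t0 α) / Real.sin θ := by
  have h := div_pos (sin_t0_pos hα) (Real.sin_pos_of_mem_Ioo hθ)
  rw [Z0, ← Real.rpow_mul h.le, one_div_mul_cancel hα.1.ne', Real.rpow_one]

theorem negRadicand_im_nonneg {α θ t : ℝ} (hα : α ∈ Ioo (0 : ℝ) 2) (hθ : θ ∈ Ioo 0 Real.pi)
    (ht : t ∈ Icc 0 (Z0 α θ)) : 0 ≤ (negRadicand α θ (t ^ α)).im := by
  have hs := Real.sin_pos_of_mem_Ioo hθ
  have h := Real.rpow_le_rpow ht.1 ht.2 hα.1.le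
  rw [Z0_rpow hα hθ, le_div_iff₀ hs] at h
  rw [negRadicand_im]
  linarith

/-- An explicit formula for `ρ_α(θ)`. -/
noncomputable def rhoFormula (α θ : ℝ) : ℝ :=
  (∫ t in (0 : ℝ)..(Z0 α θ), (upperSqrt (negRadicand α θ (t ^ α))).im)
    - 2 * Real.sin (θ / α) * ∫ ξ in (0 : ℝ)..1, √(1 - ξ ^ α)

theorem continuous_upperSqrt_negRadicand {α : ℝ} (hα : 0 < α) (θ : ℝ) :
    Continuous fun t : ℝ => upperSqrt (negRadicand α θ (t ^ α)) := by
  have h : Continuous fun t : ℝ => t ^ α := Real.continuous_rpow_const hα.le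
  refine continuous_upperSqrt.comp ?_
  unfold negRadicand
  fun_prop

theorem rho_eq_rhoFormula {ρ : ℝ → ℝ → ℝ} {α θ : ℝ} (hα : α ∈ Ioo (0 : ℝ) 2)
    (hθ : θ ∈ Ioo 0 Real.pi)
    (hρ : ∀ g : ℝ → ℂ, ContinuousOn g (Icc 0 (Z0 α θ)) →
      (∀ t ∈ Icc (0 : ℝ) (Z0 α θ),
        g t ^ 2 = Complex.exp (Complex.I * (θ : ℂ)) * ((t ^ α : ℝ) : ℂ)
          - Complex.exp (Complex.I * ((t0 α : ℝ) : ℂ))) →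
      g 0 = -Complex.I * Complex.exp (Complex.I * ((t0 α / 2 : ℝ) : ℂ)) →
      ρ α θ = (∫ t in (0 : ℝ)..(Z0 α θ), g t).re
        - 2 * Real.sin (θ / α) * ∫ ξ in (0 : ℝ)..1, √(1 - ξ ^ α)) :
    ρ α θ = rhoFormula α θ := by
  have hc : Continuous fun t : ℝ => -Complex.I * upperSqrt (negRadicand α θ (t ^ α)) :=
    continuous_const.mul (continuous_upperSqrt_negRadicand hα.1 θ)
  rw [hρ _ hc.continuousOn, rhoFormula]
  · congr 1
    have h := Complex.reCLM.intervalIntegral_comp_comm (hc.intervalIntegrable 0 (Z0 α θ)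
      (μ := volume))
    rw [← Complex.reCLM_apply, ← h]
    simp
  · intro t ht
    rw [mul_pow, upperSqrt_sq (negRadicand_im_nonneg hα hθ ht), neg_sq, Complex.I_sq, negRadicand]
    ring
  · rw [Real.zero_rpow hα.1.ne', negRadicand, Complex.ofReal_zero, mul_zero, sub_zero,
      upperSqrt_exp (t0_pos hα.1).le (t0_lt_pi hα).le]

theorem rhoFormula_eq_rescaled {α θ : ℝ} (hα : α ∈ Ioo (0 : ℝ) 2) (hθ : θ ∈ Ioo 0 Real.pi) :
    rhoFormula α θ = Z0 α θ * (∫ s in (0 : ℝ)..1,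
        (upperSqrt (negRadicand α θ (Real.sin (t0 α) / Real.sin θ * s ^ α))).im)
      - 2 * Real.sin (θ / α) * ∫ ξ in (0 : ℝ)..1, √(1 - ξ ^ α) := by
  rw [rhoFormula]
  congr 1
  have h := intervalIntegral.mul_integral_comp_mul_left (a := 0) (b := 1)
    (f := fun t : ℝ => (upperSqrt (negRadicand α θ (t ^ α))).im) (Z0 α θ)
  rw [mul_zero, mul_one] at h
  rw [← h]
  congr 1
  refine intervalIntegral.integral_congr fun s hs => ?_
  rw [uIcc_of_le zero_le_one] at hs
  simp only [Real.mul_rpow (Z0_pos hα hθ).le hs.1, Z0_rpow hα hθ]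

theorem continuousOn_parametric_intervalIntegral {X : Type*} [TopologicalSpace X]
    [FirstCountableTopology X] {S : Set X} {f : X → ℝ → ℝ} {a b : ℝ} (hab : a ≤ b)
    (hf : ContinuousOn (Function.uncurry f) (S ×ˢ Icc a b)) :
    ContinuousOn (fun x => ∫ t in a..b, f x t) S := by
  rw [continuousOn_iff_continuous_domRestrict]
  have h : Continuous (Function.uncurry fun (x : S) (t : ℝ) => f x (projIcc a b hab t)) :=
    hf.comp_continuous (f := fun p : S × ℝ => ((p.1 : X), (projIcc a b hab p.2 : ℝ)))
      (by fun_prop) fun p => ⟨p.1.2, (projIcc a b hab p.2).2⟩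
  refine (intervalIntegral.continuous_parametric_intervalIntegral_of_continuous' h a b).congr
    fun x => intervalIntegral.integral_congr fun t ht => ?_
  rw [uIcc_of_le hab] at ht
  simp only [projIcc_of_mem hab ht]

theorem continuousOn_rhoFormula :
    ContinuousOn (fun p : ℝ × ℝ => rhoFormula p.1 p.2) (Ioo 0 2 ×ˢ Ioo 0 Real.pi) := by
  have ht0 : ContinuousOn (fun p : ℝ × ℝ => t0 p.1) (Ioo 0 2 ×ˢ Ioo 0 Real.pi) := fun p hp =>
    (ContinuousAt.comp (continuousAt_t0 hp.1.1) continuousAt_fst).continuousWithinAt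
  have hquot : ContinuousOn (fun p : ℝ × ℝ => Real.sin (t0 p.1) / Real.sin p.2)
      (Ioo 0 2 ×ˢ Ioo 0 Real.pi) :=
    (Real.continuous_sin.comp_continuousOn ht0).div (by fun_prop)
      fun p hp => (Real.sin_pos_of_mem_Ioo hp.2).ne'
  have hpow : ContinuousOn (fun q : (ℝ × ℝ) × ℝ => q.2 ^ q.1.1)
      ((Ioo 0 2 ×ˢ Ioo 0 Real.pi) ×ˢ Icc 0 1) :=
    ContinuousOn.rpow (by fun_prop) (by fun_prop) fun q hq => Or.inr hq.1.1.1
  have hfst : MapsTo (Prod.fst : (ℝ × ℝ) × ℝ → ℝ × ℝ)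
      ((Ioo 0 2 ×ˢ Ioo 0 Real.pi) ×ˢ Icc (0 : ℝ) 1) (Ioo 0 2 ×ˢ Ioo 0 Real.pi) := fun q hq => hq.1
  have hZ : ContinuousOn (fun p : ℝ × ℝ => Z0 p.1 p.2) (Ioo 0 2 ×ˢ Ioo 0 Real.pi) := by
    unfold Z0
    refine hquot.rpow (ContinuousOn.div (by fun_prop) (by fun_prop) fun p hp => hp.1.1.ne')
      fun p hp => Or.inl (div_pos (sin_t0_pos hp.1) (Real.sin_pos_of_mem_Ioo hp.2)).ne'
  have hint : ContinuousOn (fun p : ℝ × ℝ => ∫ s in (0 : ℝ)..1,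
      (upperSqrt (negRadicand p.1 p.2 (Real.sin (t0 p.1) / Real.sin p.2 * s ^ p.1))).im)
      (Ioo 0 2 ×ˢ Ioo 0 Real.pi) := by
    refine continuousOn_parametric_intervalIntegral zero_le_one ?_
    refine (Complex.continuous_im.comp continuous_upperSqrt).comp_continuousOn ?_
    have h₁ := ht0.comp continuousOn_fst hfst
    have h₂ := hquot.comp continuousOn_fst hfst
    simp only [Function.comp_def] at h₁ h₂
    unfold negRadicand
    fun_prop
  have hint' : ContinuousOn (fun p : ℝ × ℝ => ∫ ξ in (0 : ℝ)..1, √(1 - ξ ^ p.1))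
      (Ioo 0 2 ×ˢ Ioo 0 Real.pi) := by
    refine continuousOn_parametric_intervalIntegral zero_le_one ?_
    exact Real.continuous_sqrt.comp_continuousOn (continuousOn_const.sub hpow)
  have hdiv : ContinuousOn (fun p : ℝ × ℝ => p.2 / p.1) (Ioo 0 2 ×ˢ Ioo 0 Real.pi) :=
    ContinuousOn.div (by fun_prop) (by fun_prop) fun p hp => hp.1.1.ne'
  exact ((hZ.mul hint).sub ((continuousOn_const.mul
    (Real.continuous_sin.comp_continuousOn hdiv)).mul hint')).congr
      fun p hp => rhoFormula_eq_rescaled hp.1 hp.2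

theorem integral_sqrt_one_sub_rpow_pos {α : ℝ} (hα : 0 < α) :
    0 < ∫ ξ in (0 : ℝ)..1, √(1 - ξ ^ α) := by
  have h : Continuous fun t : ℝ => t ^ α := Real.continuous_rpow_const hα.le
  refine intervalIntegral.intervalIntegral_pos_of_pos_on
    (Continuous.intervalIntegrable (by fun_prop) _ _) (fun x hx => ?_) zero_lt_one
  exact Real.sqrt_pos.2 (sub_pos.2 (Real.rpow_lt_one hx.1.le hx.2 hα))

theorem integral_sqrt_one_sub_rpow_le_one {α : ℝ} (hα : 0 < α) :
    ∫ ξ in (0 : ℝ)..1, √(1 - ξ ^ α) ≤ 1 := by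
  have h : Continuous fun t : ℝ => t ^ α := Real.continuous_rpow_const hα.le
  calc ∫ ξ in (0 : ℝ)..1, √(1 - ξ ^ α) ≤ ∫ _ in (0 : ℝ)..1, (1 : ℝ) := by
        refine intervalIntegral.integral_mono_on zero_le_one
          (Continuous.intervalIntegrable (by fun_prop) _ _) intervalIntegrable_const
          fun x hx => Real.sqrt_le_one.2 ?_
        linarith [Real.rpow_nonneg hx.1 α]
    _ = 1 := by simp

theorem rhoFormula_t0_neg {α : ℝ} (hα : α ∈ Ioo (0 : ℝ) 2) : rhoFormula α (t0 α) < 0 := by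
  have hpi := Real.pi_pos
  have h0 := t0_pos hα.1
  have hπ := t0_lt_pi hα
  have hZ : Z0 α (t0 α) = 1 := by
    rw [Z0, div_self (sin_t0_pos hα).ne', Real.one_rpow]
  have hsin : Real.sin (t0 α / α) = Real.sin (t0 α / 2) := by
    rw [← Real.sin_pi_sub]
    congr 1
    have := hα.1
    unfold t0
    field_simp
    ring
  have hint : ∫ t in (0 : ℝ)..1, (upperSqrt (negRadicand α (t0 α) (t ^ α))).im
      = Real.sin (t0 α / 2) * ∫ ξ in (0 : ℝ)..1, √(1 - ξ ^ α) := by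
    rw [← intervalIntegral.integral_const_mul]
    refine intervalIntegral.integral_congr fun s hs => ?_
    rw [uIcc_of_le zero_le_one] at hs
    have hs' : 0 ≤ 1 - s ^ α := sub_nonneg.2 (Real.rpow_le_one hs.1 hs.2 hα.1.le)
    have hrad : negRadicand α (t0 α) (s ^ α)
        = Complex.exp (t0 α * Complex.I) * ((1 - s ^ α : ℝ) : ℂ) := by
      rw [negRadicand, mul_comm Complex.I]; push_cast; ring
    simp only [upperSqrt, hrad]
    rw [norm_mul, Complex.norm_exp_ofReal_mul_I, Complex.norm_real, Real.norm_of_nonneg hs',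
      Complex.re_mul_ofReal, Complex.exp_ofReal_mul_I_re,
      Real.sin_half_eq_sqrt h0.le (by linarith), ← Real.sqrt_mul' _ hs']
    congr 1
    ring
  rw [rhoFormula, hZ, hint, hsin]
  have h := mul_pos (Real.sin_pos_of_pos_of_lt_pi (x := t0 α / 2) (by linarith) (by linarith))
    (integral_sqrt_one_sub_rpow_pos hα.1)
  linarith

theorem le_rhoFormula {α θ T : ℝ} (hα : α ∈ Ioo (0 : ℝ) 2) (hθ : θ ∈ Ioo 0 Real.pi)
    (hT : 0 ≤ T) (hT' : Real.sin θ * T ^ α ≤ Real.sin (t0 α) / 2) :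
    T * (Real.sin (t0 α) / 2 / (2 * √(1 + T ^ α)))
      - 2 * Real.sin (θ / α) * ∫ ξ in (0 : ℝ)..1, √(1 - ξ ^ α) ≤ rhoFormula α θ := by
  have hs := Real.sin_pos_of_mem_Ioo hθ
  have hs0 := sin_t0_pos hα
  have hTZ : T ≤ Z0 α θ := by
    rw [← Real.rpow_le_rpow_iff hT (Z0_pos hα hθ).le hα.1, Z0_rpow hα hθ, le_div_iff₀ hs]
    linarith
  have hc : Continuous fun t : ℝ => (upperSqrt (negRadicand α θ (t ^ α))).im :=
    Complex.continuous_im.comp (continuous_upperSqrt_negRadicand hα.1 θ)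
  refine sub_le_sub_right ?_ _
  calc T * (Real.sin (t0 α) / 2 / (2 * √(1 + T ^ α)))
      = ∫ _ in (0 : ℝ)..T, Real.sin (t0 α) / 2 / (2 * √(1 + T ^ α)) := by
        rw [intervalIntegral.integral_const, sub_zero, smul_eq_mul]
    _ ≤ ∫ t in (0 : ℝ)..T, (upperSqrt (negRadicand α θ (t ^ α))).im := by
        refine intervalIntegral.integral_mono_on hT intervalIntegrable_const
          (hc.intervalIntegrable _ _) fun t ht => ?_
        have hle := Real.rpow_le_rpow ht.1 ht.2 hα.1.le
        have hnn := Real.rpow_nonneg ht.1 α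
        refine le_upperSqrt_im (by linarith) ?_ (by linarith)
          ((norm_negRadicand_le α θ hnn).trans (by linarith))
        rw [negRadicand_im]
        linarith [mul_le_mul_of_nonneg_left hle hs.le]
    _ ≤ ∫ t in (0 : ℝ)..(Z0 α θ), (upperSqrt (negRadicand α θ (t ^ α))).im :=
        intervalIntegral.integral_mono_interval le_rfl hT hTZ
          (Eventually.of_forall fun t => Real.sqrt_nonneg _) (hc.intervalIntegrable _ _)

theorem exists_rhoFormula_pos_lt_pi {α : ℝ} (hα : α ∈ Ioo (0 : ℝ) 2) :
    ∃ θ ∈ Ioo (t0 α) Real.pi, 0 < rhoFormula α θ := by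
  have hs0 := sin_t0_pos hα
  have hexp : 0 < 1 - α / 2 := by linarith [hα.2]
  obtain ⟨T, hTlarge, hT1⟩ := (((tendsto_rpow_atTop hexp).eventually
    (eventually_gt_atTop (16 / Real.sin (t0 α)))).and (eventually_ge_atTop 1)).exists
  have hT : 0 < T := by linarith
  have hroot : √(1 + T ^ α) ≤ 2 * T ^ (α / 2) := by
    rw [Real.sqrt_le_left (by positivity), mul_pow, ← Real.rpow_natCast (T ^ (α / 2)),
      ← Real.rpow_mul hT.le]
    have := Real.one_le_rpow hT1 hα.1.le
    norm_num
    linarith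
  have hbig : 2 < T * (Real.sin (t0 α) / 2 / (2 * √(1 + T ^ α))) := by
    have hr : 0 < √(1 + T ^ α) := Real.sqrt_pos.2 (by positivity)
    have hsplit : T ^ (1 - α / 2) * T ^ (α / 2) = T := by
      rw [← Real.rpow_add hT]; simp
    have hp : 0 < T ^ (α / 2) := by positivity
    rw [div_lt_iff₀ hs0] at hTlarge
    have := mul_lt_mul_of_pos_right hTlarge hp
    rw [div_div, mul_div_assoc', lt_div_iff₀ (by positivity)]
    nlinarith
  have hlim : Tendsto (fun θ => Real.sin θ * T ^ α) (𝓝[<] Real.pi) (𝓝 0) := by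
    have : Continuous fun θ => Real.sin θ * T ^ α := by fun_prop
    simpa using (this.tendsto Real.pi).mono_left nhdsWithin_le_nhds
  obtain ⟨θ, hsmall, hθ⟩ := ((hlim.eventually (eventually_lt_nhds (half_pos hs0))).and
    (Ioo_mem_nhdsLT (t0_lt_pi hα))).exists
  refine ⟨θ, hθ, ?_⟩
  have hle := le_rhoFormula hα ⟨(t0_pos hα.1).trans hθ.1, hθ.2⟩ hT.le hsmall.le
  have := integral_sqrt_one_sub_rpow_pos hα.1
  have := integral_sqrt_one_sub_rpow_le_one hα.1
  nlinarith [Real.sin_le_one (θ / α)]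

theorem exists_rhoFormula_pos_of_lt_one {α : ℝ} (h0 : 0 < α) (h1 : α < 1) :
    ∃ θ ∈ Ioo (t0 α) (Real.pi * α), 0 < rhoFormula α θ := by
  have hα : α ∈ Ioo (0 : ℝ) 2 := ⟨h0, by linarith⟩
  have hs0 := sin_t0_pos hα
  have hpi := Real.pi_pos
  obtain ⟨T, hT, hTα⟩ : ∃ T : ℝ, 0 < T ∧ T ^ α = Real.sin (t0 α) / 2 :=
    ⟨(Real.sin (t0 α) / 2) ^ α⁻¹, by positivity, Real.rpow_inv_rpow (by positivity) h0.ne'⟩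
  have hpos : 0 < T * (Real.sin (t0 α) / 2 / (2 * √(1 + T ^ α))) := by
    have hr : 0 < √(1 + T ^ α) := Real.sqrt_pos.2 (by positivity)
    positivity
  have hlim : Tendsto (fun θ => 2 * Real.sin (θ / α) * ∫ ξ in (0 : ℝ)..1, √(1 - ξ ^ α))
      (𝓝[<] (Real.pi * α)) (𝓝 0) := by
    have : Continuous fun θ => 2 * Real.sin (θ / α) * ∫ ξ in (0 : ℝ)..1, √(1 - ξ ^ α) := by
      fun_prop
    simpa [h0.ne'] using (this.tendsto (Real.pi * α)).mono_left nhdsWithin_le_nhds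
  obtain ⟨θ, hsmall, hθ⟩ := ((hlim.eventually (eventually_lt_nhds hpos)).and
    (Ioo_mem_nhdsLT (t0_lt_pi_mul h0))).exists
  refine ⟨θ, hθ, ?_⟩
  have hle := le_rhoFormula hα ⟨(t0_pos h0).trans hθ.1, by nlinarith [hθ.2]⟩ hT.le
    (by rw [hTα]; nlinarith [Real.sin_le_one θ])
  linarith

theorem exists_rhoFormula_pos {α : ℝ} (hα : α ∈ Ioo (0 : ℝ) 2) :
    ∃ θ ∈ Ioo (t0 α) (min Real.pi (Real.pi * α)), 0 < rhoFormula α θ := by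
  have hpi := Real.pi_pos
  rcases le_or_gt 1 α with h1 | h1
  · obtain ⟨θ, hθ, h⟩ := exists_rhoFormula_pos_lt_pi hα
    exact ⟨θ, ⟨hθ.1, lt_min hθ.2 (by nlinarith [hθ.2])⟩, h⟩
  · obtain ⟨θ, hθ, h⟩ := exists_rhoFormula_pos_of_lt_one hα.1 h1
    exact ⟨θ, ⟨hθ.1, lt_min (by nlinarith [hθ.2]) hθ.2⟩, h⟩

theorem exists_rhoFormula_eq_zero {α x y : ℝ} (hα : α ∈ Ioo (0 : ℝ) 2) (hx : 0 < x)
    (hy : y < Real.pi) (hxy : x ≤ y) (hfx : rhoFormula α x < 0) (hfy : 0 < rhoFormula α y) :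
    ∃ z ∈ Ioo x y, rhoFormula α z = 0 :=
  intermediate_value_Ioo hxy (continuousOn_rhoFormula.comp (f := fun θ => (α, θ)) (by fun_prop)
    fun θ hθ => ⟨hα, hx.trans_le hθ.1, hθ.2.trans_lt hy⟩) ⟨hfx, hfy⟩

/-- the function `α ↦ θ₀(α)` is continuous on `(0,2)`, where `θ₀(α)` is the
unique zero of `ρ_α` in `(t₀(α), min(π, πα))`, and `ρ α` is any family of functions
satisfying the defining property of `ρ_α` on `[t₀(α), min(π, πα))`. -/
theorem stmt1 (ρ : ℝ → ℝ → ℝ) (θ₀ : ℝ → ℝ)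
    (hρ : ∀ α ∈ Set.Ioo (0 : ℝ) 2, ∀ θ ∈ Set.Ico (t0 α) (min Real.pi (Real.pi * α)),
      ∀ g : ℝ → ℂ,
      ContinuousOn g (Set.Icc 0 (Z0 α θ)) →
      (∀ t ∈ Set.Icc (0 : ℝ) (Z0 α θ),
        g t ^ 2 = Complex.exp (Complex.I * (θ : ℂ)) * ((t ^ α : ℝ) : ℂ)
          - Complex.exp (Complex.I * ((t0 α : ℝ) : ℂ))) →
      g 0 = -Complex.I * Complex.exp (Complex.I * ((t0 α / 2 : ℝ) : ℂ)) →
      ρ α θ = (∫ t in (0 : ℝ)..(Z0 α θ), g t).re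
        - 2 * Real.sin (θ / α) * ∫ ξ in (0 : ℝ)..1, Real.sqrt (1 - ξ ^ α))
    (hθ₀ : ∀ α ∈ Set.Ioo (0 : ℝ) 2,
      θ₀ α ∈ Set.Ioo (t0 α) (min Real.pi (Real.pi * α)) ∧ ρ α (θ₀ α) = 0 ∧
      ∀ θ ∈ Set.Ioo (t0 α) (min Real.pi (Real.pi * α)), ρ α θ = 0 → θ = θ₀ α) :
    ContinuousOn θ₀ (Set.Ioo (0 : ℝ) 2) := by
  have hmem : ∀ α ∈ Ioo (0 : ℝ) 2, ∀ θ ∈ Ioo (t0 α) (min Real.pi (Real.pi * α)),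
      θ ∈ Ioo 0 Real.pi := fun α hα θ hθ =>
    ⟨(t0_pos hα.1).trans hθ.1, hθ.2.trans_le (min_le_left _ _)⟩
  have hρ' : ∀ α ∈ Ioo (0 : ℝ) 2, ∀ θ ∈ Ioo (t0 α) (min Real.pi (Real.pi * α)),
      ρ α θ = rhoFormula α θ := fun α hα θ hθ =>
    rho_eq_rhoFormula hα (hmem α hα θ hθ) (hρ α hα θ ⟨hθ.1.le, hθ.2⟩)
  have huniq : ∀ α ∈ Ioo (0 : ℝ) 2, ∀ θ ∈ Ioo (t0 α) (min Real.pi (Real.pi * α)),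
      rhoFormula α θ = 0 → θ = θ₀ α := fun α hα θ hθ h =>
    (hθ₀ α hα).2.2 θ hθ ((hρ' α hα θ hθ).trans h)
  clear hρ
  intro α hα
  apply ContinuousAt.continuousWithinAt
  obtain ⟨hθ, -, -⟩ := hθ₀ α hα
  obtain ⟨θs, hθs, hpos⟩ := exists_rhoFormula_pos hα
  have ht0 := t0_pos hα.1
  have hπs := (hmem α hα θs hθs).2
  have hlt : θ₀ α < θs := by
    obtain ⟨z, hz, hz0⟩ := exists_rhoFormula_eq_zero hα ht0 hπs hθs.1.le (rhoFormula_t0_neg hα) hpos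
    rw [← huniq α hα z ⟨hz.1, hz.2.trans hθs.2⟩ hz0]
    exact hz.2
  have hleft : ∀ x ∈ Ioo (t0 α) (θ₀ α), rhoFormula α x < 0 := by
    intro x hx
    have hxm : x ∈ Ioo (t0 α) (min Real.pi (Real.pi * α)) := ⟨hx.1, hx.2.trans hθ.2⟩
    by_contra! hcon
    rcases hcon.eq_or_lt with h | h
    · exact hx.2.ne (huniq α hα x hxm h.symm)
    · obtain ⟨z, hz, hz0⟩ := exists_rhoFormula_eq_zero hα ht0 (hmem α hα x hxm).2 hx.1.le
        (rhoFormula_t0_neg hα) h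
      exact (hz.2.trans hx.2).ne (huniq α hα z ⟨hz.1, hz.2.trans hxm.2⟩ hz0)
  have hright : ∀ x ∈ Ioo (θ₀ α) θs, 0 < rhoFormula α x := by
    intro x hx
    have hxm : x ∈ Ioo (t0 α) (min Real.pi (Real.pi * α)) := ⟨hθ.1.trans hx.1, hx.2.trans hθs.2⟩
    by_contra! hcon
    rcases hcon.eq_or_lt with h | h
    · exact hx.1.ne' (huniq α hα x hxm h)
    · obtain ⟨z, hz, hz0⟩ := exists_rhoFormula_eq_zero hα (hmem α hα x hxm).1 hπs hx.2.le h hpos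
      exact (hx.1.trans hz.1).ne' (huniq α hα z ⟨hxm.1.trans hz.1, hz.2.trans hθs.2⟩ hz0)
  rw [ContinuousAt, (nhds_basis_Ioo (θ₀ α)).tendsto_right_iff]
  rintro ⟨a, b⟩ ⟨ha, hb⟩
  obtain ⟨x, hx, hx'⟩ := exists_between (max_lt ha hθ.1)
  obtain ⟨y, hy, hy'⟩ := exists_between (lt_min hb hlt)
  rw [max_lt_iff] at hx
  rw [lt_min_iff] at hy'
  have hxπ : x ∈ Ioo 0 Real.pi := hmem α hα x ⟨hx.2, hx'.trans hθ.2⟩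
  have hym : y ∈ Ioo (t0 α) (min Real.pi (Real.pi * α)) := ⟨hθ.1.trans hy, hy'.2.trans hθs.2⟩
  have hyπ : y ∈ Ioo 0 Real.pi := hmem α hα y hym
  have hcont : ∀ θ ∈ Ioo 0 Real.pi, ContinuousAt (fun α => rhoFormula α θ) α := fun θ hθ =>
    ((continuousOn_rhoFormula.continuousAt ((isOpen_Ioo.prod isOpen_Ioo).mem_nhds
      (mk_mem_prod hα hθ))).comp (f := fun α => (α, θ)) (by fun_prop) :)
  have hmul : ContinuousAt (fun α => Real.pi * α) α := by fun_prop
  filter_upwards [isOpen_Ioo.mem_nhds hα, (continuousAt_t0 hα.1).eventually_lt_const hx.2,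
    hmul.eventually_const_lt (lt_min_iff.1 hym.2).2,
    (hcont x hxπ).eventually_lt_const (hleft x ⟨hx.2, hx'⟩),
    (hcont y hyπ).eventually_const_lt (hright y ⟨hy, hy'.2⟩)] with β hβ h₁ h₂ h₃ h₄
  obtain ⟨z, hz, hz0⟩ := exists_rhoFormula_eq_zero hβ hxπ.1 hyπ.2 (hx'.trans hy).le h₃ h₄
  rw [← huniq β hβ z ⟨h₁.trans hz.1, hz.2.trans (lt_min hyπ.2 h₂)⟩ hz0]
  exact ⟨hx.1.trans hz.1, hz.2.trans hy'.1⟩
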